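/- A finite connected simple graph G is a convex geometry with respect to the l³-convexity if and only if the following three conditions hold: (1) G is chordal; (2) the diameter of G is at most 3; (3) every induced n-gem (n ≥ 4) contained in G is solved. -/

import Mathlib

open SimpleGraph

variable {V : Type*} {W : Type*}

/-- The convex hull of `S`: the smallest convex set containing `S`. -/
def chull (Cvx : Set V → Prop) (S : Set V) : Set V := ⋂₀ {T | S ⊆ T ∧ Cvx T}

/-- The set of extreme vertices of `S`. -/
def extremeSet (Cvx : Set V → Prop) (S : Set V) : Set V := {x | x ∈ S ∧ Cvx (S \ {x})}

/-- A convexity is a convex geometry if every convex set is the convex hull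
of its extreme vertices. -/
def IsConvexGeometry (Cvx : Set V → Prop) : Prop :=
  ∀ S : Set V, Cvx S → S = chull Cvx (extremeSet Cvx S)

/-- Convexity induced by a system of p-walks: `S` is convex iff every vertex
lying on a p-walk between two vertices of `S` belongs to `S`. -/
def PConvex (G : SimpleGraph V) (P : ∀ ⦃u v : V⦄, G.Walk u v → Prop) (S : Set V) : Prop :=
  ∀ ⦃u v : V⦄, u ∈ S → v ∈ S → ∀ w : G.Walk u v, P w → ∀ x ∈ w.support, x ∈ S

/-- `x` and `y` appear consecutively (in either order) in the list `l`. -/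
def consecIn (l : List V) (x y : V) : Prop := [x, y] <:+: l ∨ [y, x] <:+: l

/-- An induced path: a path such that the only edges of `G` between its vertices
are the consecutive ones. -/
def IsInducedPathW (G : SimpleGraph V) {u v : V} (w : G.Walk u v) : Prop :=
  w.IsPath ∧ ∀ x ∈ w.support, ∀ y ∈ w.support, G.Adj x y → consecIn w.support x y

/-- An induced cycle: a cycle such that the only edges of `G` between its vertices
are the consecutive (cyclically) ones. -/
def IsInducedCycleW (G : SimpleGraph V) {u : V} (w : G.Walk u u) : Prop :=
  w.IsCycle ∧ ∀ x ∈ w.support, ∀ y ∈ w.support, G.Adj x y → consecIn w.support x y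

/-- A graph is chordal if it has no induced cycle of length at least 4. -/
def Chordal (G : SimpleGraph V) : Prop :=
  ¬ ∃ (u : V) (w : G.Walk u u), IsInducedCycleW G w ∧ 4 ≤ w.length

/-- The cycle `w` has an odd chord: an edge of `G` joining two vertices of the cycle
whose distance along the cycle is odd and greater than 1. -/
def HasOddChord (G : SimpleGraph V) {u : V} (w : G.Walk u u) : Prop :=
  ∃ i j : ℕ, ∃ hi : i < w.support.length, ∃ hj : j < w.support.length, i < j ∧
    G.Adj (w.support.get ⟨i, hi⟩) (w.support.get ⟨j, hj⟩) ∧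
    Odd (min (j - i) (w.length - (j - i))) ∧ 1 < min (j - i) (w.length - (j - i))

/-- A graph is strongly chordal if it is chordal and every even cycle of length
at least 6 has an odd chord. -/
def StronglyChordal (G : SimpleGraph V) : Prop :=
  Chordal G ∧ ∀ (u : V) (w : G.Walk u u), w.IsCycle → Even w.length → 6 ≤ w.length →
    HasOddChord G w

/-- Closed neighborhood `N[v]`. -/
def closedNbhd (G : SimpleGraph V) (v : V) : Set V := insert v (G.neighborSet v)

/-- A vertex is simple if the closed neighborhoods of its closed neighbors form a
family totally ordered by inclusion. -/
def SimpleVtx (G : SimpleGraph V) (v : V) : Prop :=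
  ∀ u ∈ closedNbhd G v, ∀ w ∈ closedNbhd G v,
    closedNbhd G u ⊆ closedNbhd G w ∨ closedNbhd G w ⊆ closedNbhd G u

/-- A vertex is simplicial if its closed neighborhood is a clique. -/
def SimplicialVtx (G : SimpleGraph V) (v : V) : Prop :=
  G.IsClique (closedNbhd G v)

/-- An even-chorded path: a path with no odd chord and such that no endpoint
lies in a chord. -/
def IsEvenChorded (G : SimpleGraph V) {u v : V} (w : G.Walk u v) : Prop :=
  w.IsPath ∧ ∀ i j : ℕ, ∀ hi : i < w.support.length, ∀ hj : j < w.support.length,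
    i + 1 < j → G.Adj (w.support.get ⟨i, hi⟩) (w.support.get ⟨j, hj⟩) →
      Even (j - i) ∧ 0 < i ∧ j < w.support.length - 1

/-- A tolled walk `u₀u₁…u_k`: `u₀uᵢ ∈ E(G)` implies `i = 1` and `u_ju_k ∈ E(G)`
implies `j = k - 1`. -/
def IsTolledWalk (G : SimpleGraph V) {u v : V} (w : G.Walk u v) : Prop :=
  ∀ i : ℕ, ∀ hi : i < w.support.length,
    (G.Adj u (w.support.get ⟨i, hi⟩) → i = 1) ∧
    (G.Adj (w.support.get ⟨i, hi⟩) v → i = w.support.length - 2)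

/-- A weakly toll walk `u₀u₁…u_k`: `u₀uᵢ ∈ E(G)` implies `uᵢ = u₁` and
`u_ju_k ∈ E(G)` implies `u_j = u_{k-1}`. -/
def IsWeaklyTollWalk (G : SimpleGraph V) {u v : V} (w : G.Walk u v) : Prop :=
  ∀ i : ℕ, ∀ hi : i < w.support.length,
    (G.Adj u (w.support.get ⟨i, hi⟩) → w.support.get ⟨i, hi⟩ = w.support.getD 1 u) ∧
    (G.Adj (w.support.get ⟨i, hi⟩) v → w.support.get ⟨i, hi⟩ = w.support.getD (w.support.length - 2) v)

/-- An interval graph: vertices can be assigned nonempty closed real intervals so that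
distinct vertices are adjacent iff the intervals intersect. -/
def IsIntervalGraph (G : SimpleGraph V) : Prop :=
  ∃ a b : V → ℝ, (∀ v, a v ≤ b v) ∧
    ∀ u v : V, u ≠ v →
      (G.Adj u v ↔ (Set.Icc (a u) (b u) ∩ Set.Icc (a v) (b v)).Nonempty)

/-- A proper interval graph: an interval model in which no interval properly
contains another. -/
def IsProperIntervalGraph (G : SimpleGraph V) : Prop :=
  ∃ a b : V → ℝ, (∀ v, a v ≤ b v) ∧
    (∀ u v : V, u ≠ v →
      (G.Adj u v ↔ (Set.Icc (a u) (b u) ∩ Set.Icc (a v) (b v)).Nonempty)) ∧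
    ∀ u v : V, ¬ (Set.Icc (a u) (b u) ⊂ Set.Icc (a v) (b v))

/-- An end vertex: some interval model in which its interval is an end interval. -/
def IsEndVertex (G : SimpleGraph V) (x : V) : Prop :=
  ∃ a b : V → ℝ, (∀ v, a v ≤ b v) ∧
    (∀ u v : V, u ≠ v →
      (G.Adj u v ↔ (Set.Icc (a u) (b u) ∩ Set.Icc (a v) (b v)).Nonempty)) ∧
    ((∀ v, a x ≤ a v) ∨ (∀ v, b v ≤ b x))

/-- `G` contains an induced subgraph isomorphic to `H`. -/
def HasInducedSubgraphIso (G : SimpleGraph V) (H : SimpleGraph W) : Prop :=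
  ∃ f : W ↪ V, ∀ a b : W, G.Adj (f a) (f b) ↔ H.Adj a b

def gemGraph : SimpleGraph (Fin 5) :=
  SimpleGraph.fromRel fun a b =>
    ((a : ℕ), (b : ℕ)) ∈ [(0,1),(1,2),(2,3),(4,0),(4,1),(4,2),(4,3)]

def houseGraph : SimpleGraph (Fin 5) :=
  SimpleGraph.fromRel fun a b =>
    ((a : ℕ), (b : ℕ)) ∈ [(0,1),(1,2),(2,3),(0,3),(0,4),(1,4)]

def dominoGraph : SimpleGraph (Fin 6) :=
  SimpleGraph.fromRel fun a b =>
    ((a : ℕ), (b : ℕ)) ∈ [(0,1),(1,2),(2,3),(0,3),(2,4),(4,5),(3,5)]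

def aGraph : SimpleGraph (Fin 6) :=
  SimpleGraph.fromRel fun a b =>
    ((a : ℕ), (b : ℕ)) ∈ [(0,1),(1,2),(2,3),(0,3),(2,4),(3,5)]

/-- A triangle path: a path such that any two of its vertices at distance
greater than 2 along the path are non-adjacent in `G`. -/
def IsTrianglePath (G : SimpleGraph V) {u v : V} (w : G.Walk u v) : Prop :=
  w.IsPath ∧ ∀ i j : ℕ, ∀ hi : i < w.support.length, ∀ hj : j < w.support.length,
    i + 2 < j → ¬ G.Adj (w.support.get ⟨i, hi⟩) (w.support.get ⟨j, hj⟩)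

/-- `S` is `H`-free convex. -/
def HFreeConvex [Fintype W] (G : SimpleGraph V) (H : SimpleGraph W) (S : Set V) : Prop :=
  ∀ (S' : Finset V), ↑S' ⊆ S → S'.card = Fintype.card W - 1 →
    ∀ x : V, Nonempty ((G.induce (↑S' ∪ {x} : Set V)) ≃g H) → x ∈ S

/-- `a b c d` is an induced path on four vertices of `G`. -/
def InducedP4 (G : SimpleGraph V) (a b c d : V) : Prop :=
  G.Adj a b ∧ G.Adj b c ∧ G.Adj c d ∧ ¬ G.Adj a c ∧ ¬ G.Adj a d ∧ ¬ G.Adj b d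

/-- Every connected component of `G` is a star. -/
def StarForest (G : SimpleGraph V) : Prop :=
  ∀ v : V, ∃ c : V, G.Reachable v c ∧ (∀ x, G.Reachable c x → x ≠ c → G.Adj c x) ∧
    ∀ x y, G.Adj c x → G.Adj c y → ¬ G.Adj x y

/-- An induced `n`-gem in `G`: `x 0, …, x n` is an induced path and `u` is adjacent
to all of them, the whole forming an induced subgraph of `G`. -/
def IsInducedNGem (G : SimpleGraph V) (n : ℕ) (x : Fin (n + 1) → V) (u : V) : Prop :=
  Function.Injective x ∧ (∀ i, x i ≠ u) ∧
  (∀ i j, G.Adj (x i) (x j) ↔ ((i : ℕ) + 1 = (j : ℕ) ∨ (j : ℕ) + 1 = (i : ℕ))) ∧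
  (∀ i, G.Adj u (x i))

/-- The induced `n`-gem is solved: there is an induced path of length 3 in `G`
connecting `x 0` and `x n` that avoids `u`. -/
def GemSolved (G : SimpleGraph V) (n : ℕ) (x : Fin (n + 1) → V) (u : V) : Prop :=
  ∃ w : G.Walk (x 0) (x (Fin.last n)), IsInducedPathW G w ∧ w.length = 3 ∧ u ∉ w.support

/-- Indexed induced paths. -/
def IndPath (G : SimpleGraph V) (n : ℕ) (x : ℕ → V) : Prop :=
  (∀ i j, i ≤ n → j ≤ n → x i = x j → i = j) ∧
  (∀ i j, i ≤ n → j ≤ n → (G.Adj (x i) (x j) ↔ (i + 1 = j ∨ j + 1 = i)))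

lemma infix_pair_iff (l : List V) (a b : V) :
    [a, b] <:+: l ↔ ∃ i, l[i]? = some a ∧ l[i+1]? = some b := by
  constructor
  · rintro ⟨s, t, rfl⟩
    refine ⟨s.length, ?_, ?_⟩ <;> simp
  · induction l with
    | nil => simp
    | cons c l ih =>
      rintro ⟨i, h1, h2⟩
      cases i with
      | zero =>
        cases l with
        | nil => simp at h2
        | cons d l =>
          simp at h1 h2
          subst h1 h2
          exact ⟨[], l, by simp⟩
      | succ i =>
        exact List.infix_cons (ih ⟨i, by simpa using h1, by simpa using h2⟩)

lemma infix_support_iff {G : SimpleGraph V} {u v : V} (w : G.Walk u v) (a b : V) :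
    [a, b] <:+: w.support ↔ ∃ i, i < w.length ∧ w.getVert i = a ∧ w.getVert (i+1) = b := by
  rw [infix_pair_iff]
  constructor
  · rintro ⟨i, h1, h2⟩
    have hi : i + 1 < w.support.length := (List.getElem?_eq_some_iff.1 h2).1
    rw [Walk.length_support] at hi
    refine ⟨i, by omega, ?_, ?_⟩
    · rw [← Walk.getVert_eq_support_getElem? w (by omega)] at h1
      simpa using h1
    · rw [← Walk.getVert_eq_support_getElem? w (by omega)] at h2
      simpa using h2
  · rintro ⟨i, hi, h1, h2⟩
    refine ⟨i, ?_, ?_⟩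
    · rw [← Walk.getVert_eq_support_getElem? w (by omega), h1]
    · rw [← Walk.getVert_eq_support_getElem? w (by omega), h2]

lemma consecIn_support_iff {G : SimpleGraph V} {u v : V} (w : G.Walk u v) (a b : V) :
    consecIn w.support a b ↔ ∃ i, i < w.length ∧
      ((w.getVert i = a ∧ w.getVert (i+1) = b) ∨ (w.getVert i = b ∧ w.getVert (i+1) = a)) := by
  unfold consecIn
  rw [infix_support_iff, infix_support_iff]
  constructor
  · rintro (⟨i, hi, h⟩ | ⟨i, hi, h⟩)
    · exact ⟨i, hi, Or.inl h⟩
    · exact ⟨i, hi, Or.inr h⟩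
  · rintro ⟨i, hi, h | h⟩
    · exact Or.inl ⟨i, hi, h⟩
    · exact Or.inr ⟨i, hi, h⟩

lemma isInducedPathW_iff {G : SimpleGraph V} {u v : V} (w : G.Walk u v) :
    IsInducedPathW G w ↔ IndPath G w.length w.getVert := by
  unfold IsInducedPathW IndPath
  rw [← Walk.IsPath.getVert_injOn_iff]
  constructor
  · rintro ⟨h1, h2⟩
    refine ⟨fun i j hi hj h => h1 hi hj h, fun i j hi hj => ⟨fun h => ?_, ?_⟩⟩
    · have := h2 _ (w.getVert_mem_support i) _ (w.getVert_mem_support j) h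
      rw [consecIn_support_iff] at this
      obtain ⟨k, hk, ⟨ha, hb⟩ | ⟨ha, hb⟩⟩ := this
      · have := h1 (show k ∈ {i | i ≤ w.length} from hk.le) hi ha
        have := h1 (show k+1 ∈ {i | i ≤ w.length} from hk) hj hb
        omega
      · have := h1 (show k ∈ {i | i ≤ w.length} from hk.le) hj ha
        have := h1 (show k+1 ∈ {i | i ≤ w.length} from hk) hi hb
        omega
    · rintro (rfl | rfl)
      · exact w.adj_getVert_succ (by omega)
      · exact (w.adj_getVert_succ (by omega)).symm
  · rintro ⟨h1, h2⟩
    refine ⟨fun i hi j hj h => h1 i j hi hj h, fun a ha b hb hab => ?_⟩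
    obtain ⟨i, rfl, hi⟩ := Walk.mem_support_iff_exists_getVert.1 ha
    obtain ⟨j, rfl, hj⟩ := Walk.mem_support_iff_exists_getVert.1 hb
    rw [consecIn_support_iff]
    rcases (h2 i j hi hj).1 hab with h | h
    · exact ⟨i, by omega, Or.inl ⟨rfl, by rw [h]⟩⟩
    · exact ⟨j, by omega, Or.inr ⟨rfl, by rw [h]⟩⟩

lemma exists_walk_of_seq {G : SimpleGraph V} (n : ℕ) : ∀ (x : ℕ → V),
    (∀ i, i < n → G.Adj (x i) (x (i+1))) →
    ∃ w : G.Walk (x 0) (x n), w.length = n ∧ ∀ i, i ≤ n → w.getVert i = x i := by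
  induction n with
  | zero => exact fun x _ => ⟨Walk.nil, rfl, fun i hi => by
      obtain rfl : i = 0 := by omega
      rfl⟩
  | succ n ih =>
    intro x hx
    obtain ⟨w, hw, hv⟩ := ih (fun i => x (i+1)) (fun i hi => hx (i+1) (by omega))
    refine ⟨Walk.cons (hx 0 (by omega)) w, by simp [hw], fun i hi => ?_⟩
    cases i with
    | zero => rfl
    | succ i => simpa using hv i (by omega)

lemma IndPath.congr {G : SimpleGraph V} {n : ℕ} {x y : ℕ → V} (h : IndPath G n x)
    (hxy : ∀ i, i ≤ n → y i = x i) : IndPath G n y := by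
  refine ⟨fun i j hi hj e => ?_, fun i j hi hj => ?_⟩
  · rw [hxy i hi, hxy j hj] at e; exact h.1 i j hi hj e
  · rw [hxy i hi, hxy j hj]; exact h.2 i j hi hj

lemma IndPath.exists_walk {G : SimpleGraph V} {n : ℕ} {x : ℕ → V} (h : IndPath G n x) :
    ∃ w : G.Walk (x 0) (x n), IsInducedPathW G w ∧ w.length = n ∧
      ∀ i, i ≤ n → w.getVert i = x i := by
  obtain ⟨w, hw, hv⟩ := exists_walk_of_seq (G := G) n x
    (fun i hi => (h.2 i (i+1) hi.le hi).2 (Or.inl rfl))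
  refine ⟨w, ?_, hw, hv⟩
  rw [isInducedPathW_iff, hw]
  exact h.congr hv

/-- The l³-convexity. -/
abbrev L3 (G : SimpleGraph V) (S : Set V) : Prop :=
  PConvex G (fun _ _ w => IsInducedPathW G w ∧ w.length ≤ 3) S

lemma L3_iff {G : SimpleGraph V} {S : Set V} : L3 G S ↔
    ∀ n x, n ≤ 3 → IndPath G n x → x 0 ∈ S → x n ∈ S → ∀ i, i ≤ n → x i ∈ S := by
  constructor
  · intro h n x hn hx h0 h1 i hi
    obtain ⟨w, hw, hl, hv⟩ := hx.exists_walk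
    have := h h0 h1 w ⟨hw, by omega⟩ _ (w.getVert_mem_support i)
    rwa [hv i hi] at this
  · intro h u v hu hv w hw a ha
    obtain ⟨i, rfl, hi⟩ := Walk.mem_support_iff_exists_getVert.1 ha
    exact h w.length w.getVert hw.2 ((isInducedPathW_iff w).1 hw.1) (by simpa using hu)
      (by simpa using hv) i hi

lemma indPath_two {G : SimpleGraph V} {a b c : V} (hab : G.Adj a b) (hbc : G.Adj b c)
    (hac : a ≠ c) (nac : ¬ G.Adj a c) :
    ∃ x : ℕ → V, IndPath G 2 x ∧ x 0 = a ∧ x 1 = b ∧ x 2 = c := by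
  refine ⟨fun i => if i = 0 then a else if i = 1 then b else c, ⟨?_, ?_⟩, rfl, rfl, rfl⟩
  · intro i j hi hj
    have := hab.ne; have := hbc.ne
    interval_cases i <;> interval_cases j <;> grind
  · intro i j hi hj
    have := hab.symm; have := hbc.symm
    have : ¬ G.Adj c a := fun h => nac h.symm
    interval_cases i <;> interval_cases j <;> simp_all

lemma indPath_three {G : SimpleGraph V} {a b c d : V} (hab : G.Adj a b) (hbc : G.Adj b c)
    (hcd : G.Adj c d) (nac : ¬ G.Adj a c) (nbd : ¬ G.Adj b d) (nad : ¬ G.Adj a d) :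
    ∃ x : ℕ → V, IndPath G 3 x ∧ x 0 = a ∧ x 1 = b ∧ x 2 = c ∧ x 3 = d := by
  refine ⟨fun i => if i = 0 then a else if i = 1 then b else if i = 2 then c else d,
    ⟨?_, ?_⟩, rfl, rfl, rfl, rfl⟩
  · intro i j hi hj
    have := hab.ne; have := hbc.ne; have := hcd.ne
    have : a ≠ c := by rintro rfl; exact nad hcd
    have : b ≠ d := by rintro rfl; exact nad hab
    have : a ≠ d := by rintro rfl; exact nac hcd.symm
    interval_cases i <;> interval_cases j <;> grind
  · intro i j hi hj
    have := hab.symm; have := hbc.symm; have := hcd.symm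
    have : ¬ G.Adj c a := fun h => nac h.symm
    have : ¬ G.Adj d b := fun h => nbd h.symm
    have : ¬ G.Adj d a := fun h => nad h.symm
    interval_cases i <;> interval_cases j <;> simp_all

lemma L3_of {G : SimpleGraph V} {S : Set V}
    (h3 : ∀ a b c, G.Adj a b → G.Adj b c → a ≠ c → ¬ G.Adj a c → a ∈ S → c ∈ S → b ∈ S)
    (h4 : ∀ a b c d, G.Adj a b → G.Adj b c → G.Adj c d → ¬ G.Adj a c → ¬ G.Adj b d →
      ¬ G.Adj a d → a ≠ d → a ∈ S → d ∈ S → b ∈ S ∧ c ∈ S) : L3 G S := by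
  rw [L3_iff]
  intro n x hn hx h0 h1 i hi
  have A := hx.2
  have I := hx.1
  rcases Nat.eq_zero_or_pos i with rfl | hi0
  · exact h0
  rcases hi.eq_or_lt with rfl | hi1
  · exact h1
  interval_cases n
  · omega
  · omega
  · obtain rfl : i = 1 := by omega
    refine h3 (x 0) (x 1) (x 2) ?_ ?_ ?_ ?_ h0 h1
    · simp [A]
    · simp [A]
    · intro h; simpa using I _ _ (by omega) (by omega) h
    · simp [A]
  · have := h4 (x 0) (x 1) (x 2) (x 3) (by simp [A]) (by simp [A]) (by simp [A]) (by simp [A])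
      (by simp [A]) (by simp [A])
      (by intro h; simpa using I _ _ (by omega) (by omega) h) h0 h1
    interval_cases i
    · exact this.1
    · exact this.2

lemma L3.mid {G : SimpleGraph V} {S : Set V} (h : L3 G S) {a b c : V}
    (hab : G.Adj a b) (hbc : G.Adj b c) (hac : a ≠ c) (nac : ¬ G.Adj a c)
    (ha : a ∈ S) (hc : c ∈ S) : b ∈ S := by
  obtain ⟨x, hx, rfl, rfl, rfl⟩ := indPath_two hab hbc hac nac
  exact L3_iff.1 h 2 x (by omega) hx ha hc 1 (by omega)

lemma chordal_apex {G : SimpleGraph V} (hG : Chordal G) {n : ℕ} {x : ℕ → V} {u : V}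
    (hx : IndPath G n x) (hn : 2 ≤ n) (h0 : G.Adj u (x 0)) (h1 : G.Adj u (x n))
    (hu : ∀ i, 0 < i → i < n → ¬ G.Adj u (x i) ∧ u ≠ x i) : False := by
  apply hG
  set y : ℕ → V := fun i => if i = n + 1 then u else x i with hy
  have yx : ∀ i, i ≤ n → y i = x i := fun i hi => by simp [hy]; omega
  have yu : y (n+1) = u := by simp [hy]
  have hux : ∀ i, i ≤ n → u ≠ x i := by
    intro i hi
    rcases Nat.eq_zero_or_pos i with rfl | hi0
    · exact h0.ne
    rcases hi.eq_or_lt with rfl | hi1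
    · exact h1.ne
    exact (hu i hi0 hi1).2
  have hadj : ∀ i, i ≤ n → G.Adj u (x i) → i = 0 ∨ i = n := by
    intro i hi h
    by_contra hc
    exact (hu i (by omega) (by omega)).1 h
  obtain ⟨w, hw, hv⟩ := exists_walk_of_seq (G := G) (n+1) y (by
    intro i hi
    rcases (Nat.lt_succ_iff.1 hi).eq_or_lt with rfl | hi1
    · rw [yx _ le_rfl, yu]; exact h1.symm
    · rw [yx _ (by omega), yx _ (by omega)]
      exact (hx.2 _ _ (by omega) (by omega)).2 (Or.inl rfl))
  have yinj : ∀ i j, i ≤ n+1 → j ≤ n+1 → y i = y j → i = j := by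
    intro i j hi hj e
    rcases hi.eq_or_lt with rfl | hi1 <;> rcases hj.eq_or_lt with rfl | hj1
    · rfl
    · rw [yu, yx j (by omega)] at e; exact absurd e (hux _ (by omega))
    · rw [yu, yx i (by omega)] at e; exact absurd e.symm (hux _ (by omega))
    · rw [yx i (by omega), yx j (by omega)] at e; exact hx.1 _ _ (by omega) (by omega) e
  have hp : w.IsPath := by
    rw [← Walk.IsPath.getVert_injOn_iff]
    intro i hi j hj e
    simp only [Set.mem_ofPred_eq, hw] at hi hj
    rw [hv i hi, hv j hj] at e
    exact yinj i j hi hj e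
  have e0 : G.Adj (y (n+1)) (y 0) := by rw [yu, yx 0 (by omega)]; exact h0
  have yadj : ∀ i j, i < j → j ≤ n+1 → G.Adj (y i) (y j) → i + 1 = j ∨ (i = 0 ∧ j = n+1) := by
    intro i j hij hj h
    rcases hj.eq_or_lt with rfl | hj1
    · rw [yu, yx i (by omega)] at h
      rcases hadj i (by omega) h.symm <;> omega
    · rw [yx i (by omega), yx j (by omega), hx.2 _ _ (by omega) (by omega)] at h
      omega
  refine ⟨y (n+1), Walk.cons e0 w, ⟨?_, ?_⟩, ?_⟩
  · rw [Walk.cons_isCycle_iff]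
    refine ⟨hp, fun he => ?_⟩
    have hs := (Walk.adj_toSubgraph_iff_mem_edges (p := w)).2 he
    rw [Walk.toSubgraph_adj_iff] at hs
    obtain ⟨i, hi, hil⟩ := hs
    rw [hw] at hil
    rw [hv i (by omega), hv (i+1) (by omega), Sym2.eq_iff] at hi
    rcases hi with ⟨a, b⟩ | ⟨a, b⟩
    · have := yinj _ _ (by omega) (by omega) a
      omega
    · have := yinj _ _ (by omega) (by omega) a
      have := yinj _ _ (by omega) (by omega) b
      omega
  · have key : ∀ i j, i < j → j ≤ n+1 → G.Adj (y i) (y j) →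
        consecIn (Walk.cons e0 w).support (y i) (y j) := by
      intro i j hij hj h
      rw [consecIn_support_iff]
      rcases yadj i j hij hj h with rfl | ⟨rfl, rfl⟩
      · refine ⟨i+1, by simp [hw]; omega, Or.inl ?_⟩
        rw [Walk.getVert_cons_succ, Walk.getVert_cons_succ, hv _ (by omega), hv _ (by omega)]
        exact ⟨rfl, rfl⟩
      · refine ⟨0, by simp, Or.inr ?_⟩
        simp
    have hmem : ∀ a ∈ (Walk.cons e0 w).support, ∃ i, i ≤ n + 1 ∧ y i = a := by
      intro a ha
      rw [Walk.support_cons, List.mem_cons] at ha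
      rcases ha with rfl | ha
      · exact ⟨n+1, le_rfl, rfl⟩
      · obtain ⟨i, rfl, hi⟩ := Walk.mem_support_iff_exists_getVert.1 ha
        exact ⟨i, by omega, (hv i (by omega)).symm⟩
    intro a ha b hb hab
    obtain ⟨i, hi, rfl⟩ := hmem a ha
    obtain ⟨j, hj, rfl⟩ := hmem b hb
    rcases lt_trichotomy i j with h | h | h
    · exact key i j h hj hab
    · subst h; exact absurd hab (G.loopless.irrefl _)
    · exact (key j i h hi hab.symm).symm
  · simp [hw]; omega

lemma exists_geodesic {G : SimpleGraph V} {a b : V} (h : G.Reachable a b) :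
    ∃ x : ℕ → V, IndPath G (G.dist a b) x ∧ x 0 = a ∧ x (G.dist a b) = b := by
  obtain ⟨w, hw⟩ := h.exists_walk_length_eq_dist
  have hd : ∀ i, i ≤ w.length → G.dist a (w.getVert i) = i := by
    intro i hi
    have h1 : G.dist a (w.getVert i) ≤ i := by
      have := dist_le (w.take i)
      rw [Walk.take_length] at this
      omega
    have h2 := (w.take i).reachable.dist_triangle_left b
    have h3 := dist_le (w.drop i)
    rw [Walk.drop_length] at h3
    omega
  have hr : ∀ i, G.Reachable a (w.getVert i) := fun i => (w.take i).reachable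
  have hstep : ∀ i j, i ≤ w.length → j ≤ w.length → G.Adj (w.getVert i) (w.getVert j) →
      j ≤ i + 1 := by
    intro i j hi hj hij
    have := (hr i).dist_triangle_left (w.getVert j)
    rw [hd i hi, hd j hj, dist_eq_one_iff_adj.2 hij] at this
    exact this
  refine ⟨w.getVert, ?_, by simp, by rw [← hw]; simp⟩
  rw [← hw]
  have hinj : ∀ i j, i ≤ w.length → j ≤ w.length → w.getVert i = w.getVert j → i = j := by
    intro i j hi hj e
    rw [← hd i hi, ← hd j hj, e]
  refine ⟨hinj, fun i j hi hj => ⟨fun hij => ?_, ?_⟩⟩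
  · have h1 := hstep i j hi hj hij
    have h2 := hstep j i hj hi hij.symm
    have : i ≠ j := by rintro rfl; exact G.loopless.irrefl _ hij
    omega
  · rintro (rfl | rfl)
    · exact w.adj_getVert_succ (by omega)
    · exact (w.adj_getVert_succ (by omega)).symm

/-- The graph `G` with only the edges inside `B` kept. -/
def restr (G : SimpleGraph V) (B : Set V) : SimpleGraph V where
  Adj u v := G.Adj u v ∧ u ∈ B ∧ v ∈ B
  symm := ⟨fun _ _ h => ⟨h.1.symm, h.2.2, h.2.1⟩⟩
  loopless := ⟨fun _ h => G.loopless.irrefl _ h.1⟩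

lemma exists_indPath_in {G : SimpleGraph V} {B : Set V} {a b : V} (hab : a ≠ b)
    (h : (restr G B).Reachable a b) :
    ∃ n x, IndPath G n x ∧ x 0 = a ∧ x n = b ∧ ∀ i, i ≤ n → x i ∈ B := by
  obtain ⟨x, hx, h0, h1⟩ := exists_geodesic h
  set n := (restr G B).dist a b
  have hn : 0 < n := h.pos_dist_of_ne hab
  have hB : ∀ i, i ≤ n → x i ∈ B := by
    intro i hi
    rcases hi.eq_or_lt with rfl | hi1
    · have := (hx.2 (n-1) n (by omega) (by omega)).2 (by omega)
      exact this.2.2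
    · exact ((hx.2 i (i+1) (by omega) (by omega)).2 (by omega)).2.1
  refine ⟨n, x, ⟨hx.1, fun i j hi hj => ?_⟩, h0, h1, hB⟩
  rw [← hx.2 i j hi hj]
  exact ⟨fun h => ⟨h, hB i hi, hB j hj⟩, fun h => h.1⟩

lemma chull_L3 {G : SimpleGraph V} (D : Set V) : L3 G (chull (L3 G) D) := by
  intro u v hu hv w hw x hx T hT
  exact hT.2 (hu T hT) (hv T hT) w hw x hx

lemma subset_chull (Cvx : Set V → Prop) (D : Set V) : D ⊆ chull Cvx D :=
  fun _ hx _ hT => hT.1 hx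

lemma chull_subset {Cvx : Set V → Prop} {D C : Set V} (h : D ⊆ C) (hC : Cvx C) :
    chull Cvx D ⊆ C := fun _ hx => hx C ⟨h, hC⟩

lemma geom_key {G : SimpleGraph V} (hG : IsConvexGeometry (L3 G)) {D C : Set V}
    (hC : L3 G C) (hD : ∀ d ∈ D, d ∈ C ∨ ∃ a ∈ D, ∃ b ∈ D, G.Adj a d ∧ G.Adj d b ∧ a ≠ b ∧
      ¬ G.Adj a b) : D ⊆ C := by
  refine (subset_chull (L3 G) D).trans ?_
  rw [hG _ (chull_L3 D)]
  apply chull_subset _ hC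
  rintro e ⟨he, hex⟩
  have heD : e ∈ D := by
    by_contra hne
    have : chull (L3 G) D ⊆ chull (L3 G) D \ {e} :=
      chull_subset (fun d hd => ⟨subset_chull _ _ hd, fun h => hne (h ▸ hd)⟩) hex
    exact (this he).2 rfl
  rcases hD e heD with h | ⟨a, ha, b, hb, hae, heb, hab, nab⟩
  · exact h
  · exact absurd rfl (hex.mid hae heb hab nab ⟨subset_chull _ _ ha, hae.ne⟩
      ⟨subset_chull _ _ hb, heb.ne'⟩).2

lemma forward_chordal {G : SimpleGraph V} (hG : IsConvexGeometry (L3 G)) : Chordal G := by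
  rintro ⟨u, w, ⟨hc, hi⟩, hl⟩
  have hE : L3 G (∅ : Set V) := fun _ _ h => absurd h (Set.notMem_empty _)
  have := geom_key hG (D := {v | v ∈ w.support}) hE ?_
  · exact this (show u ∈ {v | v ∈ w.support} from w.start_mem_support)
  · intro d hd
    right
    obtain ⟨i, rfl, hil⟩ := Walk.mem_support_iff_exists_getVert.1 hd
    have hinj : ∀ i j, i < w.length → j < w.length → w.getVert i = w.getVert j → i = j := by
      intro i j hi hj h
      exact hc.getVert_injOn' (by simp; omega) (by simp; omega) h
    have hz : w.getVert w.length = w.getVert 0 := by simp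
    -- indices p, i', s all below the length with cyclic consecutive relation
    obtain ⟨p, i', s, hp, hi', hs, hie, h1, h2, hps⟩ : ∃ p i' s, p < w.length ∧ i' < w.length ∧
        s < w.length ∧ w.getVert i' = w.getVert i ∧
        G.Adj (w.getVert p) (w.getVert i') ∧ G.Adj (w.getVert i') (w.getVert s) ∧
        (p + 2 = s ∨ p + 2 = s + w.length) := by
      have hlast : G.Adj (w.getVert (w.length - 1)) (w.getVert 0) := by
        have := w.adj_getVert_succ (i := w.length - 1) (by omega)
        rwa [Nat.sub_add_cancel (by omega), hz] at this
      by_cases h0 : i = 0 ∨ i = w.length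
      · refine ⟨w.length - 1, 0, 1, by omega, by omega, by omega, ?_, hlast,
          w.adj_getVert_succ (by omega), by omega⟩
        rcases h0 with rfl | rfl
        · rfl
        · exact hz.symm
      · have hpi : G.Adj (w.getVert (i-1)) (w.getVert i) := by
          have := w.adj_getVert_succ (i := i - 1) (by omega)
          rwa [Nat.sub_add_cancel (by omega)] at this
        by_cases h1 : i = w.length - 1
        · refine ⟨i - 1, i, 0, by omega, by omega, by omega, rfl, hpi, ?_, by omega⟩
          rw [h1]; exact hlast
        · exact ⟨i - 1, i, i + 1, by omega, by omega, by omega, rfl, hpi,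
            w.adj_getVert_succ (by omega), by omega⟩
    rw [hie] at h1 h2
    refine ⟨_, w.getVert_mem_support p, _, w.getVert_mem_support s, h1, h2, ?_, ?_⟩
    · intro h
      have := hinj p s hp hs h
      omega
    · intro h
      have := hi _ (w.getVert_mem_support p) _ (w.getVert_mem_support s) h
      rw [consecIn_support_iff] at this
      obtain ⟨k, hk, hk2⟩ := this
      by_cases hkl : k + 1 = w.length
      · rw [hkl, hz] at hk2
        rcases hk2 with ⟨a, b⟩ | ⟨a, b⟩
        · have := hinj _ _ (by omega) (by omega) a
          have := hinj _ _ (by omega) (by omega) b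
          omega
        · have := hinj _ _ (by omega) (by omega) a
          have := hinj _ _ (by omega) (by omega) b
          omega
      · rcases hk2 with ⟨a, b⟩ | ⟨a, b⟩
        · have := hinj _ _ (by omega) (by omega) a
          have := hinj _ _ (by omega) (by omega) b
          omega
        · have := hinj _ _ (by omega) (by omega) a
          have := hinj _ _ (by omega) (by omega) b
          omega

lemma indPath_geom {G : SimpleGraph V} (hG : IsConvexGeometry (L3 G)) {n : ℕ} {x : ℕ → V}
    (hx : IndPath G n x) {C : Set V} (hC : L3 G C) (h0 : x 0 ∈ C) (hn : x n ∈ C) :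
    ∀ i, i ≤ n → x i ∈ C := by
  have := geom_key hG (D := {v | ∃ i, i ≤ n ∧ x i = v}) hC ?_
  · intro i hi
    exact this ⟨i, hi, rfl⟩
  · rintro d ⟨i, hi, rfl⟩
    rcases Nat.eq_zero_or_pos i with rfl | hi0
    · exact Or.inl h0
    rcases hi.eq_or_lt with rfl | hi1
    · exact Or.inl hn
    right
    refine ⟨_, ⟨i-1, by omega, rfl⟩, _, ⟨i+1, by omega, rfl⟩, ?_, ?_, ?_, ?_⟩
    · rw [hx.2 _ _ (by omega) (by omega)]; omega
    · rw [hx.2 _ _ (by omega) (by omega)]; omega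
    · intro h; have := hx.1 _ _ (by omega) (by omega) h; omega
    · rw [hx.2 _ _ (by omega) (by omega)]; omega

lemma forward_diam {G : SimpleGraph V} (hconn : G.Connected) (hG : IsConvexGeometry (L3 G))
    (u v : V) : G.dist u v ≤ 3 := by
  by_contra hd
  push Not at hd
  have key : ∀ a b c d, a ∈ ({u, v} : Set V) → d ∈ ({u, v} : Set V) → a ≠ d →
      (a = b ∨ G.Adj a b) → (b = c ∨ G.Adj b c) → G.Adj c d → False := by
    have hle : ∀ a b c d, (a = b ∨ G.Adj a b) → (b = c ∨ G.Adj b c) → G.Adj c d →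
        G.dist a d ≤ 3 := by
      intro a b c d h1 h2 h3
      have k : ∀ p q, (p = q ∨ G.Adj p q) → G.dist p q ≤ 1 := by
        rintro p q (rfl | h)
        · simp
        · rw [dist_eq_one_iff_adj.2 h]
      have := k _ _ h1
      have := k _ _ h2
      have := k _ _ (Or.inr h3)
      have := hconn.dist_triangle (u := a) (v := b) (w := d)
      have := hconn.dist_triangle (u := b) (v := c) (w := d)
      omega
    intro a b c d ha hd' had h1 h2 h3
    have := hle a b c d h1 h2 h3
    rcases ha with rfl | rfl <;> rcases hd' with rfl | rfl
    · exact had rfl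
    · omega
    · rw [dist_comm] at this; omega
    · exact had rfl
  have hC : L3 G ({u, v} : Set V) := by
    apply L3_of
    · intro a b c hab hbc hac _ ha hc
      exact (key a a b c ha hc hac (Or.inl rfl) (Or.inr hab) hbc).elim
    · intro a b c d hab hbc hcd _ _ _ had ha hd
      exact (key a b c d ha hd had (Or.inr hab) (Or.inr hbc) hcd).elim
  obtain ⟨x, hx, h0, h1⟩ := exists_geodesic (hconn u v)
  have := indPath_geom hG hx hC (by simp [h0]) (by simp [h1]) 1 (by omega)
  rcases this with h | h
  · rw [← h0] at h
    have := hx.1 _ _ (by omega) (by omega) h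
    omega
  · rw [Set.mem_singleton_iff] at h
    rw [← h1] at h
    have := hx.1 _ _ (by omega) (by omega) h
    omega

lemma gemSolved_of {G : SimpleGraph V} {a d u : V} {b c : V} (hab : G.Adj a b)
    (hbc : G.Adj b c) (hcd : G.Adj c d) (nac : ¬ G.Adj a c) (nbd : ¬ G.Adj b d)
    (nad : ¬ G.Adj a d) (hua : G.Adj u a) (hud : G.Adj u d) :
    ∃ w : G.Walk a d, IsInducedPathW G w ∧ w.length = 3 ∧ u ∉ w.support := by
  obtain ⟨x, hx, rfl, rfl, rfl, rfl⟩ := indPath_three hab hbc hcd nac nbd nad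
  obtain ⟨w, hw, hl, hv⟩ := hx.exists_walk
  refine ⟨w, hw, hl, fun hu => ?_⟩
  obtain ⟨i, rfl, hi⟩ := Walk.mem_support_iff_exists_getVert.1 hu
  rw [hl] at hi
  rw [hv i hi, hx.2 _ _ (by omega) (by omega)] at hua hud
  omega

lemma forward_gem {G : SimpleGraph V} (hG : IsConvexGeometry (L3 G)) (n : ℕ) (hn : 4 ≤ n)
    (x : Fin (n + 1) → V) (u : V) (hgem : IsInducedNGem G n x u) : GemSolved G n x u := by
  have hch := forward_chordal hG
  obtain ⟨hinj, hxu, hadj, hu⟩ := hgem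
  by_contra hns
  set a := x 0 with ha
  set d := x (Fin.last n) with hd
  set y : ℕ → V := fun i => if h : i < n + 1 then x ⟨i, h⟩ else u with hy
  have yx : ∀ i (h : i ≤ n), y i = x ⟨i, by omega⟩ := fun i h => by simp [hy, h]
  have y0 : y 0 = a := by rw [yx 0 (by omega)]; rfl
  have yn : y n = d := by rw [yx n (by omega)]; rfl
  have hp : IndPath G n y := by
    refine ⟨fun i j hi hj e => ?_, fun i j hi hj => ?_⟩
    · rw [yx i hi, yx j hj] at e
      simpa using hinj e
    · rw [yx i hi, yx j hj, hadj]
  have nad : ¬ G.Adj a d := by rw [← y0, ← yn, hp.2 _ _ (by omega) (by omega)]; omega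
  have had : a ≠ d := by
    rw [← y0, ← yn]; intro h; have := hp.1 _ _ (by omega) (by omega) h; omega
  let C : Set V := {v | v = a ∨ v = d ∨ (G.Adj v a ∧ G.Adj v d)}
  have hcl : ∀ p q, p ∈ C → q ∈ C → p ≠ q → ¬ G.Adj p q → (p = a ∧ q = d) ∨ (p = d ∧ q = a) := by
    rintro p q (rfl | rfl | ⟨h1, h2⟩) (rfl | rfl | ⟨h3, h4⟩) hpq npq
    · exact absurd rfl hpq
    · exact Or.inl ⟨rfl, rfl⟩
    · exact absurd h3.symm npq
    · exact Or.inr ⟨rfl, rfl⟩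
    · exact absurd rfl hpq
    · exact absurd h4.symm npq
    · exact absurd h1 npq
    · exact absurd h2 npq
    · exfalso
      obtain ⟨z, hz, z0, z1, z2⟩ := indPath_two h1.symm h2 had nad
      subst z1
      refine chordal_apex hch hz (u := q) le_rfl (by rwa [z0]) (by rwa [z2]) ?_
      intro i hi hi2
      obtain rfl : i = 1 := by omega
      exact ⟨fun h => npq h.symm, hpq.symm⟩
  have hC : L3 G C := by
    apply L3_of
    · intro p q r hpq hqr hpr npr hp hr
      rcases hcl p r hp hr hpr npr with ⟨rfl, rfl⟩ | ⟨rfl, rfl⟩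
      · exact Or.inr (Or.inr ⟨hpq.symm, hqr⟩)
      · exact Or.inr (Or.inr ⟨hqr, hpq.symm⟩)
    · intro p q r s hpq hqr hrs npr nqs nps hps hp hs
      exfalso
      apply hns
      rcases hcl p s hp hs hps nps with ⟨rfl, rfl⟩ | ⟨rfl, rfl⟩
      · exact gemSolved_of hpq hqr hrs npr nqs nps (hu _) (hu _)
      · exact gemSolved_of hrs.symm hqr.symm hpq.symm (fun h => nqs h.symm)
          (fun h => npr h.symm) (fun h => nps h.symm) (hu _) (hu _)
  have := indPath_geom hG hp hC (by rw [y0]; exact Or.inl rfl) (by rw [yn]; exact Or.inr (Or.inl rfl))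
    1 (by omega)
  rcases this with h | h | ⟨_, h⟩
  · rw [← y0] at h; have := hp.1 _ _ (by omega) (by omega) h; omega
  · rw [← yn] at h; have := hp.1 _ _ (by omega) (by omega) h; omega
  · rw [← yn, hp.2 _ _ (by omega) (by omega)] at h; omega

lemma IndPath.take {G : SimpleGraph V} {n m : ℕ} {x : ℕ → V} (h : IndPath G n x) (hm : m ≤ n) :
    IndPath G m x :=
  ⟨fun i j hi hj => h.1 i j (by omega) (by omega), fun i j hi hj => h.2 i j (by omega) (by omega)⟩

lemma IndPath.shift {G : SimpleGraph V} {n : ℕ} {x : ℕ → V} (h : IndPath G n x) {k m : ℕ}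
    (hk : k + m ≤ n) : IndPath G m (fun i => x (k + i)) := by
  refine ⟨fun i j hi hj e => ?_, fun i j hi hj => ?_⟩
  · have := h.1 _ _ (by omega) (by omega) e; omega
  · rw [h.2 _ _ (by omega) (by omega)]; omega

lemma IndPath.snoc {G : SimpleGraph V} {n : ℕ} {x : ℕ → V} (h : IndPath G n x) {q : V}
    (hq : ∀ i, i ≤ n → q ≠ x i) (ha : ∀ i, i ≤ n → (G.Adj q (x i) ↔ i = n)) :
    ∃ y, IndPath G (n+1) y ∧ (∀ i, i ≤ n → y i = x i) ∧ y (n+1) = q := by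
  refine ⟨fun i => if i = n + 1 then q else x i, ⟨?_, ?_⟩, ?_, by simp⟩
  · intro i j hi hj e
    by_cases h1 : i = n+1 <;> by_cases h2 : j = n+1
    · omega
    · simp only [h1, h2, if_true, if_false] at e
      exact absurd e (hq j (by omega))
    · simp only [h1, h2, if_true, if_false] at e
      exact absurd e.symm (hq i (by omega))
    · simp only [h1, h2, if_false] at e
      exact h.1 i j (by omega) (by omega) e
  · intro i j hi hj
    by_cases h1 : i = n+1 <;> by_cases h2 : j = n+1
    · simp [h1, h2]
    · simp only [h1, h2, if_true, if_false]
      rw [ha j (by omega)]; omega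
    · simp only [h1, h2, if_true, if_false]
      rw [G.adj_comm, ha i (by omega)]; omega
    · simp only [h1, h2, if_false]
      exact h.2 i j (by omega) (by omega)
  · intro i hi
    have : i ≠ n + 1 := by omega
    simp [this]

lemma IndPath.cons {G : SimpleGraph V} {n : ℕ} {x : ℕ → V} (h : IndPath G n x) {q : V}
    (hq : ∀ i, i ≤ n → q ≠ x i) (ha : ∀ i, i ≤ n → (G.Adj q (x i) ↔ i = 0)) :
    ∃ y, IndPath G (n+1) y ∧ (∀ i, i ≤ n → y (i+1) = x i) ∧ y 0 = q := by
  refine ⟨fun i => if i = 0 then q else x (i-1), ⟨?_, ?_⟩, by simp, by simp⟩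
  · intro i j hi hj e
    by_cases h1 : i = 0 <;> by_cases h2 : j = 0
    · omega
    · simp only [h1, h2, if_true, if_false] at e
      exact absurd e (hq _ (by omega))
    · simp only [h1, h2, if_true, if_false] at e
      exact absurd e.symm (hq _ (by omega))
    · simp only [h1, h2, if_false] at e
      have := h.1 _ _ (by omega) (by omega) e
      omega
  · intro i j hi hj
    by_cases h1 : i = 0 <;> by_cases h2 : j = 0
    · simp [h1, h2]
    · simp only [h1, h2, if_true, if_false]
      rw [ha _ (by omega)]; omega
    · simp only [h1, h2, if_true, if_false]
      rw [G.adj_comm, ha _ (by omega)]; omega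
    · simp only [h1, h2, if_false]
      rw [h.2 _ _ (by omega) (by omega)]; omega

lemma apex_all {G : SimpleGraph V} (hG : Chordal G) (u : V) (n : ℕ) : ∀ (x : ℕ → V),
    IndPath G n x → G.Adj u (x 0) → G.Adj u (x n) → (∀ i, i ≤ n → u ≠ x i) →
    ∀ i, i ≤ n → G.Adj u (x i) := by
  induction n using Nat.strong_induction_on with
  | _ n ih =>
    intro x hx h0 h1 hu i hi
    rcases Nat.eq_zero_or_pos i with rfl | hi0
    · exact h0
    rcases hi.eq_or_lt with rfl | hi1
    · exact h1
    by_cases hc : ∃ c, 0 < c ∧ c < n ∧ G.Adj u (x c)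
    · obtain ⟨c, hc0, hcn, hc⟩ := hc
      rcases le_total i c with hic | hic
      · exact ih c hcn x (hx.take hcn.le) h0 hc (fun i hi => hu i (by omega)) i hic
      · have := ih (n - c) (by omega) (fun i => x (c + i)) (hx.shift (by omega)) hc
          (by rwa [Nat.add_sub_cancel' hcn.le]) (fun i hi => hu _ (by omega)) (i - c) (by omega)
        simpa [Nat.add_sub_cancel' hic] using this
    · exfalso
      refine chordal_apex hG hx (by omega) h0 h1 fun c h0 h1 => ⟨fun h => hc ⟨c, h0, h1, h⟩, ?_⟩
      exact hu c h1.le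

lemma mono_closed {G : SimpleGraph V} (hconn : G.Connected) (hG : Chordal G)
    (hdiam : ∀ u v : V, G.dist u v ≤ 3)
    (hgem : ∀ (n : ℕ), 4 ≤ n → ∀ (x : Fin (n + 1) → V) (u : V),
      IsInducedNGem G n x u → GemSolved G n x u) {C : Set V} (hC : L3 G C) (n : ℕ) :
    ∀ x, IndPath G n x → x 0 ∈ C → x n ∈ C → ∀ i, i ≤ n → x i ∈ C := by
  induction n using Nat.strong_induction_on with
  | _ n ih =>
    intro x hx h0 h1
    by_cases hn3 : n ≤ 3
    · exact L3_iff.1 hC n x hn3 hx h0 h1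
    have fin : ∀ c, 0 < c → c < n → x c ∈ C → ∀ i, i ≤ n → x i ∈ C := by
      intro c hc0 hcn hc i hi
      rcases le_total i c with hic | hic
      · exact ih c hcn x (hx.take hcn.le) h0 hc i hic
      · have := ih (n - c) (by omega) (fun i => x (c + i)) (hx.shift (by omega)) hc
          (by rwa [Nat.add_sub_cancel' hcn.le]) (i - c) (by omega)
        simpa [Nat.add_sub_cancel' hic] using this
    have hne : x 0 ≠ x n := fun h => by have := hx.1 _ _ (by omega) (by omega) h; omega
    have nadj : ¬ G.Adj (x 0) (x n) := by rw [hx.2 _ _ (by omega) (by omega)]; omega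
    -- an induced path of length three
    obtain ⟨z, hz, z0, z3⟩ : ∃ z, IndPath G 3 z ∧ z 0 = x 0 ∧ z 3 = x n := by
      obtain ⟨z, hz, z0, z1⟩ := exists_geodesic (hconn (x 0) (x n))
      have hd := hdiam (x 0) (x n)
      set m := G.dist (x 0) (x n) with hm
      interval_cases m
      · rw [z0] at z1; exact absurd z1 hne
      · exact absurd (dist_eq_one_iff_adj.1 hm.symm) nadj
      · have hu0 : G.Adj (z 1) (x 0) := by rw [← z0, hz.2 _ _ (by omega) (by omega)]; omega
        have hu1 : G.Adj (z 1) (x n) := by rw [← z1, hz.2 _ _ (by omega) (by omega)]; omega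
        have hux : ∀ i, i ≤ n → z 1 ≠ x i := by
          intro i hi h
          rw [h, hx.2 _ _ (by omega) (by omega)] at hu0 hu1
          omega
        have hall := apex_all hG (z 1) n x hx hu0 hu1 hux
        obtain ⟨w, hw, hl, -⟩ := hgem n (by omega) (fun i => x i) (z 1) ⟨
          fun i j h => Fin.ext (hx.1 _ _ (by omega) (by omega) h),
          fun i h => hux _ (by omega) h.symm,
          fun i j => hx.2 _ _ (by omega) (by omega), fun i => hall _ (by omega)⟩
        rw [isInducedPathW_iff, hl] at hw
        refine ⟨w.getVert, hw, w.getVert_zero, ?_⟩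
        rw [← hl]; exact w.getVert_length
      · exact ⟨z, hz, z0, z1⟩
    have hzC := L3_iff.1 hC 3 z le_rfl hz (by rwa [z0]) (by rwa [z3])
    set p := z 1 with hpdef
    set q := z 2 with hqdef
    have hpC : p ∈ C := hzC 1 (by omega)
    have hqC : q ∈ C := hzC 2 (by omega)
    have px0 : G.Adj p (x 0) := by rw [← z0, hz.2 _ _ (by omega) (by omega)]; omega
    have pxn : ¬ G.Adj p (x n) := by rw [← z3, hz.2 _ _ (by omega) (by omega)]; omega
    have qx0 : ¬ G.Adj q (x 0) := by rw [← z0, hz.2 _ _ (by omega) (by omega)]; omega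
    have qxn : G.Adj q (x n) := by rw [← z3, hz.2 _ _ (by omega) (by omega)]; omega
    have pq : G.Adj p q := by rw [hz.2 _ _ (by omega) (by omega)]; omega
    by_cases hp : ∃ i, i ≤ n ∧ p = x i
    · obtain ⟨i, hi, hpi⟩ := hp
      have hi1 : i = 1 := by
        rw [hpi, hx.2 _ _ (by omega) (by omega)] at px0
        omega
      exact fin i (by omega) (by omega) (hpi ▸ hpC)
    by_cases hq : ∃ i, i ≤ n ∧ q = x i
    · obtain ⟨i, hi, hqi⟩ := hq
      have hi1 : i + 1 = n := by
        rw [hqi, hx.2 _ _ (by omega) (by omega)] at qxn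
        omega
      exact fin i (by omega) (by omega) (hqi ▸ hqC)
    have hp' : ∀ i, i ≤ n → p ≠ x i := fun i hi h => hp ⟨i, hi, h⟩
    have hq' : ∀ i, i ≤ n → q ≠ x i := fun i hi h => hq ⟨i, hi, h⟩
    classical
    obtain ⟨k, hkn, hk, hkmax⟩ : ∃ k, k ≤ n ∧ G.Adj p (x k) ∧
        ∀ i, k < i → i ≤ n → ¬ G.Adj p (x i) :=
      ⟨Nat.findGreatest (fun i => G.Adj p (x i)) n, Nat.findGreatest_le n,
        Nat.findGreatest_spec (P := fun i => G.Adj p (x i)) (Nat.zero_le n) px0,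
        fun i h1 h2 => Nat.findGreatest_is_greatest h1 h2⟩
    have hkn' : k < n := lt_of_le_of_ne hkn (by rintro rfl; exact pxn hk)
    obtain ⟨j, hjn, hj, hjmin⟩ : ∃ j, j ≤ n ∧ G.Adj q (x j) ∧ ∀ i, i < j → ¬ G.Adj q (x i) := by
      have hex : ∃ j, G.Adj q (x j) := ⟨n, qxn⟩
      exact ⟨Nat.find hex, Nat.find_min' hex qxn, Nat.find_spec hex,
        fun i hi => Nat.find_min hex hi⟩
    have hj0 : 0 < j := Nat.pos_of_ne_zero (by rintro rfl; exact qx0 hj)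
    by_cases hk2 : 2 ≤ k
    · obtain ⟨y, hy, hyx, hyp⟩ := (hx.shift (k := k) (m := n - k) (by omega)).cons (q := p)
        (fun i hi => hp' _ (by omega))
        (fun i hi => ⟨fun h => by
          by_contra hne
          exact hkmax (k + i) (by omega) (by omega) h, by rintro rfl; exact hk⟩)
      have := ih (n - k + 1) (by omega) y hy (by rwa [hyp])
        (by rw [hyx _ le_rfl, Nat.add_sub_cancel' hkn]; exact h1) (0 + 1) (by omega)
      rw [hyx 0 (by omega)] at this
      exact fin k (by omega) hkn' this
    by_cases hj2 : j + 2 ≤ n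
    · obtain ⟨y, hy, hyx, hyq⟩ := (hx.take hjn).snoc (q := q) (fun i hi => hq' _ (by omega))
        (fun i hi => ⟨fun h => by
          by_contra hne
          exact hjmin i (by omega) h, by rintro rfl; exact hj⟩)
      have := ih (j + 1) (by omega) y hy (by rwa [hyx 0 (by omega)]) (by rwa [hyq]) j (by omega)
      rw [hyx j le_rfl] at this
      exact fin j hj0 (by omega) this
    exfalso
    obtain ⟨y, hy, hyx, hyq⟩ := (hx.shift (k := k) (m := j - k) (by omega)).snoc (q := q)
      (fun i hi => hq' _ (by omega))
      (fun i hi => ⟨fun h => by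
        by_contra hne
        exact hjmin (k + i) (by omega) h, by
          rintro rfl
          rw [Nat.add_sub_cancel' (by omega)]; exact hj⟩)
    refine chordal_apex hG hy (u := p) (by omega) ?_ ?_ ?_
    · rw [hyx 0 (by omega)]; exact hk
    · rw [hyq]; exact pq
    · intro i hi0 hi1
      rw [hyx i (by omega)]
      exact ⟨hkmax _ (by omega) (by omega), hp' _ (by omega)⟩

/-- The component of `k` inside `B`. -/
def compIn (G : SimpleGraph V) (B : Set V) (k : V) : Set V := {z | (restr G B).Reachable k z}

lemma compIn_subset {G : SimpleGraph V} {B : Set V} {k : V} (hk : k ∈ B) : compIn G B k ⊆ B := by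
  intro z hz
  have hz' : (restr G B).Reachable k z := hz
  rw [reachable_iff_reflTransGen] at hz'
  cases hz' with
  | refl => exact hk
  | tail _ h => exact h.2.2

lemma compIn_adj {G : SimpleGraph V} {B : Set V} {k y z : V} (hk : k ∈ B)
    (hy : y ∈ compIn G B k) (hz : z ∈ B) (h : G.Adj y z) : z ∈ compIn G B k := by
  have hy' : (restr G B).Reachable k y := hy
  exact hy'.trans (Adj.reachable (G := restr G B) ⟨h, compIn_subset hk hy, hz⟩)

lemma compIn_conn {G : SimpleGraph V} {B : Set V} {k z : V}
    (hz : z ∈ compIn G B k) : (restr G (compIn G B k)).Reachable k z := by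
  have hz' : (restr G B).Reachable k z := hz
  rw [reachable_iff_reflTransGen] at hz'
  induction hz' with
  | refl => exact Reachable.refl _
  | @tail b c hab hbc ih =>
    have hb : b ∈ compIn G B k := (reachable_iff_reflTransGen _ _).2 hab
    exact (ih hb).trans (Adj.reachable (G := restr G _) ⟨hbc.1, hb, hz⟩)

lemma path_through {G : SimpleGraph V} {K : Set V}
    (hK : ∀ a ∈ K, ∀ b ∈ K, (restr G K).Reachable a b) {a b k l : V} (hab : a ≠ b)
    (hk : k ∈ K) (hl : l ∈ K) (hak : G.Adj a k) (hbl : G.Adj b l) (nab : ¬ G.Adj a b) :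
    ∃ n x, IndPath G n x ∧ 2 ≤ n ∧ x 0 = a ∧ x n = b ∧ ∀ i, 0 < i → i < n → x i ∈ K := by
  have hr : (restr G (K ∪ {a, b})).Reachable a b := by
    have h1 : (restr G (K ∪ {a, b})).Adj a k := ⟨hak, by simp, Or.inl hk⟩
    have h2 : (restr G (K ∪ {a, b})).Adj l b := ⟨hbl.symm, Or.inl hl, by simp⟩
    have h3 : (restr G (K ∪ {a, b})).Reachable k l :=
      (hK k hk l hl).mono (show restr G K ≤ restr G (K ∪ {a, b}) from
        fun u v h => ⟨h.1, Or.inl h.2.1, Or.inl h.2.2⟩)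
    exact (h1.reachable.trans h3).trans h2.reachable
  obtain ⟨n, x, hx, h0, h1, hB⟩ := exists_indPath_in hab hr
  refine ⟨n, x, hx, ?_, h0, h1, ?_⟩
  · by_contra hn
    have : n = 0 ∨ n = 1 := by omega
    rcases this with rfl | rfl
    · exact hab (h0.symm.trans h1)
    · apply nab
      rw [← h0, ← h1, hx.2 _ _ (by omega) (by omega)]; omega
  · intro i hi0 hi1
    rcases hB i hi1.le with h | h | h
    · exact h
    · rw [← h0] at h; have := hx.1 _ _ (by omega) (by omega) h; omega
    · rw [Set.mem_singleton_iff, ← h1] at h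
      have := hx.1 _ _ (by omega) (by omega) h; omega

/-- Connected pieces of `A \ T` whose neighbourhood in `A` is a clique. -/
structure GoodPiece (G : SimpleGraph V) (A T K : Set V) : Prop where
  ne : K.Nonempty
  sub : K ⊆ A \ T
  conn : ∀ a ∈ K, ∀ b ∈ K, (restr G K).Reachable a b
  clique : ∀ a ∈ A \ K, ∀ b ∈ A \ K, (∃ k ∈ K, G.Adj a k) → (∃ k ∈ K, G.Adj b k) → a ≠ b →
    G.Adj a b

lemma GoodPiece.shrink {G : SimpleGraph V} (hG : Chordal G) {A T K : Set V}
    (h : GoodPiece G A T K) {w k' : V} (hk' : k' ∈ K) (hwk : k' ≠ w) (nwk : ¬ G.Adj k' w)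
    (hw : ∃ k ∈ K, k = w ∨ G.Adj k w)
    (hall : ∀ a ∈ A \ K, (∃ k ∈ K, G.Adj a k) → a ≠ w → G.Adj a w) :
    ∃ K', GoodPiece G A T K' ∧ K' ⊂ K := by
  set B : Set V := {z | z ∈ K ∧ z ≠ w ∧ ¬ G.Adj z w} with hB
  have hkB : k' ∈ B := ⟨hk', hwk, nwk⟩
  have hsub : compIn G B k' ⊆ B := compIn_subset hkB
  have hconn : ∀ a ∈ compIn G B k', ∀ b ∈ compIn G B k',
      (restr G (compIn G B k')).Reachable a b :=
    fun a ha b hb => (compIn_conn ha).symm.trans (compIn_conn hb)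
  have hnb : ∀ a ∈ A \ compIn G B k', (∃ k ∈ compIn G B k', G.Adj a k) → G.Adj w a := by
    rintro a ⟨haA, haK⟩ ⟨k, hk, hak⟩
    have haw : a ≠ w := by
      rintro rfl
      exact (hsub hk).2.2 hak.symm
    by_cases haK' : a ∈ K
    · by_contra hc
      exact haK (compIn_adj hkB hk ⟨haK', haw, fun h => hc h.symm⟩ hak.symm)
    · exact (hall a ⟨haA, haK'⟩ ⟨k, (hsub hk).1, hak⟩ haw).symm
  refine ⟨compIn G B k', ⟨⟨k', Reachable.refl _⟩, fun z hz => h.sub (hsub hz).1, hconn, ?_⟩, ?_⟩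
  · intro a ha b hb hak hbk hab
    have hwa := hnb a ha hak
    have hwb := hnb b hb hbk
    obtain ⟨k, hk, hak⟩ := hak
    obtain ⟨l, hl, hbl⟩ := hbk
    by_contra nab
    obtain ⟨n, x, hx, hn, h0, h1, hi⟩ := path_through hconn hab hk hl hak hbl nab
    refine chordal_apex hG hx hn (u := w) (by rwa [h0]) (by rwa [h1]) fun i h0 h1 => ?_
    have := hsub (hi i h0 h1)
    exact ⟨fun h => this.2.2 h.symm, this.2.1.symm⟩
  · refine ⟨fun z hz => (hsub hz).1, fun hc => ?_⟩
    obtain ⟨k, hk, hkw⟩ := hw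
    have := hsub (hc hk)
    rcases hkw with h | h
    · exact this.2.1 h
    · exact this.2.2 h

lemma GoodPiece.exists_simplicial [Finite V] {G : SimpleGraph V} (hG : Chordal G) {A T : Set V}
    (m : ℕ) : ∀ K, GoodPiece G A T K → K.ncard = m →
    ∃ s ∈ A \ T, ∀ a ∈ A, ∀ b ∈ A, G.Adj a s → G.Adj s b → a ≠ b → G.Adj a b := by
  induction m using Nat.strong_induction_on with
  | _ m ih =>
    intro K hK hm
    have done : (∃ K', GoodPiece G A T K' ∧ K' ⊂ K) →
        ∃ s ∈ A \ T, ∀ a ∈ A, ∀ b ∈ A, G.Adj a s → G.Adj s b → a ≠ b → G.Adj a b := by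
      rintro ⟨K', hK', hlt⟩
      exact ih K'.ncard (hm ▸ Set.ncard_lt_ncard hlt (Set.toFinite _)) K' hK' rfl
    by_cases c1 : ∃ w ∈ A \ K, (∃ k ∈ K, G.Adj w k) ∧ ∃ k' ∈ K, ¬ G.Adj k' w
    · obtain ⟨w, hw, ⟨k, hk, hwk⟩, k', hk', hn⟩ := c1
      apply done
      refine hK.shrink hG hk' ?_ hn ⟨k, hk, Or.inr hwk.symm⟩ ?_
      · rintro rfl; exact hw.2 hk'
      · intro a ha hak haw
        exact hK.clique a ha w hw hak ⟨k, hk, hwk⟩ haw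
    push Not at c1
    by_cases c2 : ∃ w ∈ K, ∃ k' ∈ K, k' ≠ w ∧ ¬ G.Adj k' w
    · obtain ⟨w, hw, k', hk', hne, hn⟩ := c2
      apply done
      refine hK.shrink hG hk' hne hn ⟨w, hw, Or.inl rfl⟩ ?_
      intro a ha hak _
      exact (c1 a ha hak w hw).symm
    push Not at c2
    obtain ⟨s, hs⟩ := hK.ne
    refine ⟨s, hK.sub hs, fun a ha b hb has hsb hab => ?_⟩
    by_cases haK : a ∈ K <;> by_cases hbK : b ∈ K
    · exact c2 b hbK a haK hab
    · exact c1 b ⟨hb, hbK⟩ ⟨s, hs, hsb.symm⟩ a haK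
    · exact (c1 a ⟨ha, haK⟩ ⟨s, hs, has⟩ b hbK).symm
    · exact hK.clique a ⟨ha, haK⟩ b ⟨hb, hbK⟩ ⟨s, hs, has⟩ ⟨s, hs, hsb.symm⟩ hab

lemma exists_simplicial [Finite V] {G : SimpleGraph V} (hG : Chordal G) {A T : Set V} {v : V}
    (hv : v ∈ A \ T)
    (hT : ∀ n x, IndPath G n x → x 0 ∈ T → x n ∈ T → ∀ i, i ≤ n → x i ∈ T) :
    ∃ s ∈ A \ T, ∀ a ∈ A, ∀ b ∈ A, G.Adj a s → G.Adj s b → a ≠ b → G.Adj a b := by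
  have hconn : ∀ a ∈ compIn G (A \ T) v, ∀ b ∈ compIn G (A \ T) v,
      (restr G (compIn G (A \ T) v)).Reachable a b :=
    fun a ha b hb => (compIn_conn ha).symm.trans (compIn_conn hb)
  refine GoodPiece.exists_simplicial hG _ (compIn G (A \ T) v)
    ⟨⟨v, Reachable.refl _⟩, compIn_subset hv, hconn, ?_⟩ rfl
  have hnb : ∀ a ∈ A \ compIn G (A \ T) v, (∃ k ∈ compIn G (A \ T) v, G.Adj a k) → a ∈ T := by
    rintro a ⟨ha, haK⟩ ⟨k, hk, hak⟩
    by_contra haT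
    exact haK (compIn_adj hv hk ⟨ha, haT⟩ hak.symm)
  intro a ha b hb hak hbk hab
  have haT := hnb a ha hak
  have hbT := hnb b hb hbk
  obtain ⟨k, hk, hak⟩ := hak
  obtain ⟨l, hl, hbl⟩ := hbk
  by_contra nab
  obtain ⟨n, x, hx, hn, h0, h1, hi⟩ := path_through hconn hab hk hl hak hbl nab
  have h2 := compIn_subset hv (hi 1 (by omega) (by omega))
  exact h2.2 (hT n x hx (by rwa [h0]) (by rwa [h1]) 1 (by omega))

lemma backward [Finite V] {G : SimpleGraph V} (hconn : G.Connected) (hG : Chordal G)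
    (hdiam : ∀ u v : V, G.dist u v ≤ 3)
    (hgem : ∀ (n : ℕ), 4 ≤ n → ∀ (x : Fin (n + 1) → V) (u : V),
      IsInducedNGem G n x u → GemSolved G n x u) : IsConvexGeometry (L3 G) := by
  intro S hS
  apply Set.Subset.antisymm
  · by_contra hc
    obtain ⟨v, hvS, hvT⟩ := Set.not_subset.1 hc
    obtain ⟨s, ⟨hsS, hsT⟩, hs⟩ := exists_simplicial hG (A := S) ⟨hvS, hvT⟩
      (fun n x => mono_closed hconn hG hdiam hgem (chull_L3 (extremeSet (L3 G) S)) n x)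
    apply hsT
    apply subset_chull
    refine ⟨hsS, L3_of ?_ ?_⟩
    · intro a b c hab hbc hac nac ha hc
      refine ⟨hS.mid hab hbc hac nac ha.1 hc.1, ?_⟩
      rintro rfl
      exact nac (hs a ha.1 c hc.1 hab hbc hac)
    · intro a b c d hab hbc hcd nac nbd nad had ha hd
      obtain ⟨x, hx, rfl, rfl, rfl, rfl⟩ := indPath_three hab hbc hcd nac nbd nad
      have hb := L3_iff.1 hS 3 x le_rfl hx ha.1 hd.1 1 (by omega)
      have hc := L3_iff.1 hS 3 x le_rfl hx ha.1 hd.1 2 (by omega)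
      refine ⟨⟨hb, ?_⟩, ⟨hc, ?_⟩⟩
      · intro h
        rw [Set.mem_singleton_iff] at h
        rw [← h] at hs
        exact nac (hs _ ha.1 _ hc hab hbc
          (fun e => by have := hx.1 _ _ (by omega) (by omega) e; omega))
      · intro h
        rw [Set.mem_singleton_iff] at h
        rw [← h] at hs
        exact nbd (hs _ hb _ hd.1 hbc hcd
          (fun e => by have := hx.1 _ _ (by omega) (by omega) e; omega))
  · exact chull_subset (fun e he => he.1) hS

/-- A finite connected simple graph `G` is a convex geometry with respect to
the l³-convexity iff `G` is chordal, has diameter at most 3, and every induced `n`-gem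
(`n ≥ 4`) contained in `G` is solved. -/
theorem l3_convex_geometry_characterization
    {V : Type*} [Fintype V] (G : SimpleGraph V) (hconn : G.Connected) :
    IsConvexGeometry (PConvex G (fun _ _ w => IsInducedPathW G w ∧ w.length ≤ 3)) ↔
      (Chordal G ∧ (∀ u v : V, G.dist u v ≤ 3) ∧
        ∀ (n : ℕ), 4 ≤ n → ∀ (x : Fin (n + 1) → V) (u : V),
          IsInducedNGem G n x u → GemSolved G n x u) := by
  constructor
  · intro h
    exact ⟨forward_chordal h, forward_diam hconn h, fun n hn x u => forward_gem h n hn x u⟩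
  · rintro ⟨h1, h2, h3⟩
    exact backward hconn h1 h2 h3
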